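/- Let the compact set A and lower semicontinuous kernel K satisfy assumptions (A1)-(A4). For each N ≥ 2 choose a configuration ω_N ∈ A^N and let ν_N be the probability measure assigning mass 1/N to each point of ω_N (counting multiplicities). Then the following are equivalent: (a) the measures ν_N converge weakly to μ_eq as N → ∞; (b) lim_{N→∞} P(ω_N) = W_K; (c) the functions x ↦ (1/N)·Σ_{y∈ω_N} K(x,y) − P(ω_N) converge to 0 in L¹(μ_eq) as N → ∞. -/

import Mathlib

open MeasureTheory Filter Topology BoundedContinuousFunction NNReal ENNReal

noncomputable section

/-- The potential of a measure `μ` with respect to the kernel `K x y = f (nndist x y)`. -/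
def potential {t : ℕ} (f : ℝ≥0 → ℝ≥0∞) (μ : Measure (EuclideanSpace ℝ (Fin t)))
    (x : EuclideanSpace ℝ (Fin t)) : ℝ≥0∞ :=
  ∫⁻ y, f (nndist x y) ∂μ

/-- The energy `I[μ] = ∫∫ K(x,y) dμ(x) dμ(y)`. -/
def energy {t : ℕ} (f : ℝ≥0 → ℝ≥0∞) (μ : Measure (EuclideanSpace ℝ (Fin t))) : ℝ≥0∞ :=
  ∫⁻ x, potential f μ x ∂μ

/-- The normalized discrete potential `(1/N) ∑_{y ∈ ω} K(x,y)` of a configuration. -/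
def discretePotential {t : ℕ} (f : ℝ≥0 → ℝ≥0∞) {N : ℕ}
    (ω : Fin N → EuclideanSpace ℝ (Fin t)) (x : EuclideanSpace ℝ (Fin t)) : ℝ≥0∞ :=
  (N : ℝ≥0∞)⁻¹ * ∑ i, f (nndist x (ω i))

/-- The polarization `P(ω) = min_{x ∈ A} (1/N) ∑_{y ∈ ω} K(x,y)` of a configuration. -/
def polarization {t : ℕ} (f : ℝ≥0 → ℝ≥0∞) (A : Set (EuclideanSpace ℝ (Fin t))) {N : ℕ}
    (ω : Fin N → EuclideanSpace ℝ (Fin t)) : ℝ≥0∞ :=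
  ⨅ x ∈ A, discretePotential f ω x

/-- The optimal `N`-point polarization `𝒫(A,N)`. -/
def maxPolarization {t : ℕ} (f : ℝ≥0 → ℝ≥0∞) (A : Set (EuclideanSpace ℝ (Fin t)))
    (N : ℕ) : ℝ≥0∞ :=
  ⨆ (ω : Fin N → EuclideanSpace ℝ (Fin t)) (_ : ∀ i, ω i ∈ A), polarization f A ω

/-- The normalized counting measure of a configuration. -/
def countingMeasure {t : ℕ} {N : ℕ} (ω : Fin N → EuclideanSpace ℝ (Fin t)) :
    Measure (EuclideanSpace ℝ (Fin t)) :=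
  (N : ℝ≥0∞)⁻¹ • ∑ i, Measure.dirac (ω i)

/-- Weak convergence of a sequence of measures: integrals of every bounded continuous
function converge. -/
def WeaklyTendsto {t : ℕ} (ν : ℕ → Measure (EuclideanSpace ℝ (Fin t)))
    (μ : Measure (EuclideanSpace ℝ (Fin t))) : Prop :=
  ∀ g : EuclideanSpace ℝ (Fin t) →ᵇ ℝ,
    Tendsto (fun N => ∫ x, g x ∂(ν N)) atTop (𝓝 (∫ x, g x ∂μ))

theorem ENNReal.eq_lintegral_Ioi_indicator_lt (a : ℝ≥0∞) :
    a = ∫⁻ s in Set.Ioi (0 : ℝ), {s : ℝ | ENNReal.ofReal s < a}.indicator 1 s := by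
  rw [lintegral_indicator_one (measurableSet_lt (by fun_prop) (by fun_prop)),
    Measure.restrict_apply (measurableSet_lt (by fun_prop) (by fun_prop))]
  induction a with
  | top => simp
  | coe r =>
    have : {s : ℝ | ENNReal.ofReal s < r} ∩ Set.Ioi 0 = Set.Ioo 0 (r : ℝ) := by
      ext s
      simp only [Set.mem_inter_iff, Set.mem_ofPred_eq, Set.mem_Ioi, Set.mem_Ioo]
      constructor
      · rintro ⟨h, hs⟩
        rw [← ENNReal.ofReal_coe_nnreal, ENNReal.ofReal_lt_ofReal_iff_of_nonneg hs.le] at h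
        exact ⟨hs, h⟩
      · rintro ⟨hs, h⟩
        rw [← ENNReal.ofReal_coe_nnreal, ENNReal.ofReal_lt_ofReal_iff_of_nonneg hs.le]
        exact ⟨h, hs⟩
    rw [this, Real.volume_Ioo]
    simp

theorem lintegral_eq_lintegral_measure_ofReal_lt {Ω : Type*} [MeasurableSpace Ω]
    (μ : Measure Ω) [SFinite μ] {g : Ω → ℝ≥0∞} (hg : Measurable g) :
    ∫⁻ x, g x ∂μ = ∫⁻ s in Set.Ioi (0 : ℝ), μ {x | ENNReal.ofReal s < g x} := by
  have hm : MeasurableSet {p : Ω × ℝ | ENNReal.ofReal p.2 < g p.1} :=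
    measurableSet_lt (by fun_prop) (by fun_prop)
  calc ∫⁻ x, g x ∂μ
      = ∫⁻ x, (∫⁻ s in Set.Ioi (0 : ℝ),
          {p : Ω × ℝ | ENNReal.ofReal p.2 < g p.1}.indicator 1 (x, s)) ∂μ := by
        refine lintegral_congr fun x => ?_
        exact ENNReal.eq_lintegral_Ioi_indicator_lt (g x)
    _ = ∫⁻ s in Set.Ioi (0 : ℝ), ∫⁻ x,
          {p : Ω × ℝ | ENNReal.ofReal p.2 < g p.1}.indicator 1 (x, s) ∂μ :=
        lintegral_lintegral_swap
          (f := fun x s => {p : Ω × ℝ | ENNReal.ofReal p.2 < g p.1}.indicator 1 (x, s))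
          (measurable_one.indicator hm).aemeasurable
    _ = ∫⁻ s in Set.Ioi (0 : ℝ), μ {x | ENNReal.ofReal s < g x} := by
        refine lintegral_congr fun s => ?_
        exact lintegral_indicator_one (s := {x | ENNReal.ofReal s < g x})
          (measurableSet_lt measurable_const hg)

/-- The integral of a lower semicontinuous function is lower semicontinuous with respect to
weak convergence. -/
theorem LowerSemicontinuous.lintegral_le_liminf {Ω : Type*} [TopologicalSpace Ω]
    [MeasurableSpace Ω] [OpensMeasurableSpace Ω] [HasOuterApproxClosed Ω] {g : Ω → ℝ≥0∞}
    (hg : LowerSemicontinuous g) {μ : ProbabilityMeasure Ω} {μs : ℕ → ProbabilityMeasure Ω}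
    (h : Tendsto μs atTop (𝓝 μ)) :
    ∫⁻ x, g x ∂(μ : Measure Ω) ≤ liminf (fun n => ∫⁻ x, g x ∂(μs n : Measure Ω)) atTop := by
  simp_rw [lintegral_eq_lintegral_measure_ofReal_lt _ hg.measurable]
  refine le_trans (lintegral_mono fun s => ?_) (lintegral_liminf_le fun n => ?_)
  · exact ProbabilityMeasure.le_liminf_measure_open_of_tendsto h (hg.isOpen_preimage _)
  · refine Antitone.measurable fun s u hsu => measure_mono fun x hx => ?_
    exact (ENNReal.ofReal_le_ofReal hsu).trans_lt hx

/-- The principle of descent. -/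
theorem potential_le_liminf {t : ℕ} {f : ℝ≥0 → ℝ≥0∞} (hf : LowerSemicontinuous f)
    {μ : ProbabilityMeasure (EuclideanSpace ℝ (Fin t))}
    {μs : ℕ → ProbabilityMeasure (EuclideanSpace ℝ (Fin t))} (h : Tendsto μs atTop (𝓝 μ))
    {x : EuclideanSpace ℝ (Fin t)} {xs : ℕ → EuclideanSpace ℝ (Fin t)}
    (hx : Tendsto xs atTop (𝓝 x)) :
    potential f μ x ≤ liminf (fun n => potential f (μs n) (xs n)) atTop := by
  have hlsc : LowerSemicontinuous
      fun p : EuclideanSpace ℝ (Fin t) × EuclideanSpace ℝ (Fin t) => f (nndist p.1 p.2) :=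
    hf.comp (by fun_prop)
  have hprod (y : EuclideanSpace ℝ (Fin t)) (ν : ProbabilityMeasure (EuclideanSpace ℝ (Fin t))) :
      potential f ν y = ∫⁻ p : EuclideanSpace ℝ (Fin t) × EuclideanSpace ℝ (Fin t),
        f (nndist p.1 p.2) ∂((diracProba y).prod ν).toMeasure := by
    rw [ProbabilityMeasure.toMeasure_prod, lintegral_prod _ hlsc.measurable.aemeasurable]
    change _ = ∫⁻ x, _ ∂(Measure.dirac y)
    rw [lintegral_dirac]
    rfl
  simp_rw [hprod]
  refine hlsc.lintegral_le_liminf ?_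
  exact (ProbabilityMeasure.continuous_prod.tendsto (diracProba x, μ)).comp
    (((continuous_diracProba.tendsto x).comp hx).prodMk_nhds h)

theorem measurable_kernel {t : ℕ} {f : ℝ≥0 → ℝ≥0∞} (hf : Measurable f)
    (y : EuclideanSpace ℝ (Fin t)) : Measurable fun x => f (nndist x y) :=
  hf.comp (by fun_prop)

theorem measurable_discretePotential {t : ℕ} {f : ℝ≥0 → ℝ≥0∞} (hf : Measurable f) {N : ℕ}
    (ω : Fin N → EuclideanSpace ℝ (Fin t)) : Measurable (discretePotential f ω) :=
  (Finset.measurable_fun_sum _ fun i _ => measurable_kernel hf (ω i)).const_mul _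

theorem potential_countingMeasure {t : ℕ} {f : ℝ≥0 → ℝ≥0∞} {N : ℕ}
    (ω : Fin N → EuclideanSpace ℝ (Fin t)) (x : EuclideanSpace ℝ (Fin t)) :
    potential f (countingMeasure ω) x = discretePotential f ω x := by
  simp [potential, countingMeasure, discretePotential]

theorem lintegral_discretePotential {t : ℕ} {f : ℝ≥0 → ℝ≥0∞} (hf : Measurable f) {N : ℕ}
    (ω : Fin N → EuclideanSpace ℝ (Fin t)) (μ : Measure (EuclideanSpace ℝ (Fin t))) :
    ∫⁻ x, discretePotential f ω x ∂μ = (N : ℝ≥0∞)⁻¹ * ∑ i, potential f μ (ω i) := by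
  unfold discretePotential potential
  rw [lintegral_const_mul _ (Finset.measurable_fun_sum _ fun i _ => measurable_kernel hf (ω i)),
    lintegral_finsetSum _ fun i _ => measurable_kernel hf (ω i)]
  simp_rw [nndist_comm]

theorem countingMeasure_compl {t N : ℕ} {A : Set (EuclideanSpace ℝ (Fin t))}
    (hA : MeasurableSet A) {ω : Fin N → EuclideanSpace ℝ (Fin t)} (hω : ∀ i, ω i ∈ A) :
    countingMeasure ω Aᶜ = 0 := by
  simp [countingMeasure, hA.compl, hω]

theorem isProbabilityMeasure_countingMeasure {t N : ℕ} [NeZero N]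
    (ω : Fin N → EuclideanSpace ℝ (Fin t)) : IsProbabilityMeasure (countingMeasure ω) := by
  constructor
  simp [countingMeasure, ENNReal.inv_mul_cancel (NeZero.ne (N : ℝ≥0∞))]

/-- The normalized counting measure of a nonempty configuration, as a probability measure. -/
def countingProbabilityMeasure {t N : ℕ} [NeZero N] (ω : Fin N → EuclideanSpace ℝ (Fin t)) :
    ProbabilityMeasure (EuclideanSpace ℝ (Fin t)) :=
  ⟨countingMeasure ω, isProbabilityMeasure_countingMeasure ω⟩

theorem weaklyTendsto_countingMeasure_iff {t : ℕ}
    (ω : (N : ℕ) → Fin N → EuclideanSpace ℝ (Fin t))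
    (μ : ProbabilityMeasure (EuclideanSpace ℝ (Fin t))) :
    WeaklyTendsto (fun N => countingMeasure (ω N)) μ ↔
      Tendsto (fun n => countingProbabilityMeasure (ω (n + 1))) atTop (𝓝 μ) := by
  rw [ProbabilityMeasure.tendsto_iff_forall_integral_tendsto]
  exact forall_congr' fun g =>
    (tendsto_add_atTop_iff_nat (f := fun N => ∫ x, g x ∂(countingMeasure (ω N))) 1).symm

/-- Sequential compactness of the probability measures carried by a compact set. -/
theorem IsCompact.exists_subseq_tendsto_probabilityMeasure {E : Type*} [MetricSpace E]
    [SecondCountableTopology E] [MeasurableSpace E] [BorelSpace E] {A : Set E} (hA : IsCompact A)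
    (μs : ℕ → ProbabilityMeasure E) (hμs : ∀ n, (μs n : Measure E) Aᶜ = 0) :
    ∃ (ν : ProbabilityMeasure E) (φ : ℕ → ℕ), (ν : Measure E) Aᶜ = 0 ∧ StrictMono φ ∧
      Tendsto (μs ∘ φ) atTop (𝓝 ν) := by
  have hK : IsCompact (closure (Set.range μs)) := by
    refine isCompact_closure_of_isTightMeasureSet ?_
    rw [isTightMeasureSet_iff_exists_isCompact_measure_compl_le]
    refine fun ε _ => ⟨A, hA, ?_⟩
    rintro _ ⟨_, ⟨n, rfl⟩, rfl⟩
    simp [hμs]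
  obtain ⟨ν, -, φ, hφ, hν⟩ := hK.tendsto_subseq fun n => subset_closure (Set.mem_range_self n)
  refine ⟨ν, φ, ?_, hφ, hν⟩
  have := ProbabilityMeasure.le_liminf_measure_open_of_tendsto hν hA.isClosed.isOpen_compl
  simpa [hμs] using this

theorem liminf_le_of_liminf_sub_eq_zero {u v : ℕ → ℝ≥0∞} {c : ℝ≥0∞}
    (h : liminf (fun n => u n - v n) atTop = 0) (hv : Tendsto v atTop (𝓝 c)) :
    liminf u atTop ≤ c := by
  refine ENNReal.le_of_forall_pos_le_add fun ε hε hc => liminf_le_of_frequently_le' ?_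
  have hε' : (0 : ℝ≥0∞) < ε / 2 := ENNReal.half_pos (by exact_mod_cast hε.ne')
  have h1 : ∃ᶠ n in atTop, u n - v n < ε / 2 :=
    frequently_lt_of_liminf_lt (by isBoundedDefault) (h ▸ hε')
  have h2 : ∀ᶠ n in atTop, v n < c + ε / 2 :=
    hv.eventually_lt_const (ENNReal.lt_add_right hc.ne hε'.ne')
  refine (h1.and_eventually h2).mono fun n hn => ?_
  calc u n ≤ u n - v n + v n := le_tsub_add
    _ ≤ ε / 2 + (c + ε / 2) := add_le_add hn.1.le hn.2.le
    _ = c + ε := by rw [add_left_comm, ENNReal.add_halves]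

/-- A bound on a potential that holds almost everywhere extends to the support. -/
theorem potential_le_of_ae_le {t : ℕ} {f : ℝ≥0 → ℝ≥0∞} (hf : LowerSemicontinuous f)
    {μ : Measure (EuclideanSpace ℝ (Fin t))}
    {ν : ProbabilityMeasure (EuclideanSpace ℝ (Fin t))} {c : ℝ≥0∞}
    (h : ∀ᵐ x ∂μ, potential f ν x ≤ c) {x : EuclideanSpace ℝ (Fin t)}
    (hx : ∀ U : Set (EuclideanSpace ℝ (Fin t)), IsOpen U → x ∈ U → 0 < μ U) :
    potential f ν x ≤ c := by
  have hex (n : ℕ) : ∃ y, dist y x < 1 / ((n : ℝ) + 1) ∧ potential f ν y ≤ c := by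
    by_contra! hcon
    refine (hx (Metric.ball x (1 / ((n : ℝ) + 1))) Metric.isOpen_ball
      (Metric.mem_ball_self (by positivity))).ne' (measure_mono_null (fun y hy => ?_) h)
    exact not_le.2 (hcon y hy)
  choose y hy hyc using hex
  have hyx : Tendsto y atTop (𝓝 x) := tendsto_iff_dist_tendsto_zero.2 <|
    squeeze_zero (fun _ => dist_nonneg) (fun n => (hy n).le) tendsto_one_div_add_atTop_nhds_zero_nat
  exact (potential_le_liminf hf tendsto_const_nhds hyx).trans
    (liminf_le_of_frequently_le' (Frequently.of_forall hyc))

theorem polarization_tfae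
    {t : ℕ} (A : Set (EuclideanSpace ℝ (Fin t))) (hA : IsCompact A)
    (f : ℝ≥0 → ℝ≥0∞) (hf : LowerSemicontinuous f)
    (μeq : Measure (EuclideanSpace ℝ (Fin t))) (hμeq : IsProbabilityMeasure μeq)
    (hμeqA : μeq Aᶜ = 0)
    (hA1 : ∃ μ : Measure (EuclideanSpace ℝ (Fin t)),
      IsProbabilityMeasure μ ∧ μ Aᶜ = 0 ∧ energy f μ < ⊤)
    (hA2min : ∀ ν : Measure (EuclideanSpace ℝ (Fin t)),
      IsProbabilityMeasure ν → ν Aᶜ = 0 → energy f μeq ≤ energy f ν)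
    (hA2uniq : ∀ ν : Measure (EuclideanSpace ℝ (Fin t)),
      IsProbabilityMeasure ν → ν Aᶜ = 0 → energy f ν = energy f μeq → ν = μeq)
    (hA3 : ∀ x ∈ A, ∀ U : Set (EuclideanSpace ℝ (Fin t)), IsOpen U → x ∈ U → 0 < μeq U)
    (W : ℝ≥0∞) (hW : 0 < W) (hA4 : ∀ x ∈ A, potential f μeq x = W)
    (ω : (N : ℕ) → Fin N → EuclideanSpace ℝ (Fin t)) (hω : ∀ N, ∀ i, ω N i ∈ A) :
    List.TFAE [
      WeaklyTendsto (fun N => countingMeasure (ω N)) μeq,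
      Tendsto (fun N => polarization f A (ω N)) atTop (𝓝 W),
      Tendsto (fun N => ∫⁻ x, (discretePotential f (ω N) x - polarization f A (ω N)) ∂μeq)
        atTop (𝓝 0)] := by
  have hAm : MeasurableSet A := hA.measurableSet
  have hmem : ∀ᵐ x ∂μeq, x ∈ A := hμeqA
  have henergy : energy f μeq = W := by
    unfold energy
    rw [lintegral_congr_ae (hmem.mono hA4)]
    simp
  have hWtop : W ≠ ⊤ := by
    obtain ⟨μ, hμ, hμA, hμf⟩ := hA1
    exact henergy ▸ ((hA2min μ hμ hμA).trans_lt hμf).ne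
  have hint (n : ℕ) : ∫⁻ x, discretePotential f (ω (n + 1)) x ∂μeq = W := by
    rw [lintegral_discretePotential hf.measurable, Finset.sum_congr rfl fun i _ => hA4 _ (hω _ i),
      Finset.sum_const, Finset.card_univ, Fintype.card_fin, nsmul_eq_mul, ← mul_assoc,
      ENNReal.inv_mul_cancel (by simp) (by simp), one_mul]
  have hPle (N : ℕ) : ∀ᵐ x ∂μeq, polarization f A (ω N) ≤ discretePotential f (ω N) x :=
    hmem.mono fun x hx => iInf₂_le x hx
  have hPW (n : ℕ) : polarization f A (ω (n + 1)) ≤ W := by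
    rw [← hint n]
    simpa using lintegral_mono_ae (hPle (n + 1))
  have hdef (n : ℕ) : ∫⁻ x, (discretePotential f (ω (n + 1)) x - polarization f A (ω (n + 1))) ∂μeq
      = W - polarization f A (ω (n + 1)) := by
    rw [lintegral_sub measurable_const (by simpa using ne_top_of_le_ne_top hWtop (hPW n))
      (hPle _), hint]
    simp
  have hbc : Tendsto (fun N => polarization f A (ω N)) atTop (𝓝 W) ↔
      Tendsto (fun N => ∫⁻ x, (discretePotential f (ω N) x - polarization f A (ω N)) ∂μeq)
        atTop (𝓝 0) := by
    rw [← tendsto_add_atTop_iff_nat 1, ← tendsto_add_atTop_iff_nat (l := 𝓝 (0 : ℝ≥0∞)) 1]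
    simp_rw [hdef]
    refine ⟨fun h => ?_, fun h => ?_⟩
    · simpa using ENNReal.Tendsto.sub tendsto_const_nhds h (Or.inl hWtop)
    · simpa [ENNReal.sub_sub_cancel hWtop (hPW _)] using
        ENNReal.Tendsto.sub (tendsto_const_nhds (x := W)) h (Or.inl hWtop)
  obtain ⟨μeq, rfl⟩ : ∃ μ : ProbabilityMeasure (EuclideanSpace ℝ (Fin t)),
      (μ : Measure (EuclideanSpace ℝ (Fin t))) = μeq := ⟨⟨μeq, hμeq⟩, rfl⟩
  rw [weaklyTendsto_countingMeasure_iff]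
  set ν : ℕ → ProbabilityMeasure (EuclideanSpace ℝ (Fin t)) := fun n =>
    countingProbabilityMeasure (ω (n + 1))
  have hνA (n : ℕ) : (ν n : Measure (EuclideanSpace ℝ (Fin t))) Aᶜ = 0 :=
    countingMeasure_compl hAm (hω _)
  have hpot (n : ℕ) (x : EuclideanSpace ℝ (Fin t)) :
      potential f (ν n) x = discretePotential f (ω (n + 1)) x := potential_countingMeasure _ _
  tfae_have 2 ↔ 3 := hbc
  tfae_have 1 → 2 := by
    intro h
    rw [← tendsto_add_atTop_iff_nat 1]
    refine tendsto_order.2 ⟨fun c hc => ?_, fun c hc => .of_forall fun n => (hPW n).trans_lt hc⟩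
    by_contra hcon
    obtain ⟨φ, hφ, hφc⟩ := extraction_of_frequently_atTop (not_eventually.1 hcon)
    obtain ⟨d, hcd, hdW⟩ := exists_between hc
    have hex (n : ℕ) : ∃ x ∈ A, discretePotential f (ω (φ n + 1)) x < d := by
      have := (not_lt.1 (hφc n)).trans_lt hcd
      simpa [polarization, iInf_lt_iff] using this
    choose x hxA hxd using hex
    obtain ⟨y, hyA, ψ, hψ, hy⟩ := hA.tendsto_subseq hxA
    have hdesc := potential_le_liminf hf
      (h.comp (hφ.tendsto_atTop.comp hψ.tendsto_atTop)) hy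
    rw [hA4 y hyA] at hdesc
    refine hdW.not_ge (hdesc.trans (liminf_le_of_frequently_le' (.of_forall fun n => ?_)))
    exact (hpot _ _).trans_le (hxd (ψ n)).le
  tfae_have 2 → 1 := by
    intro h
    have h0 := hbc.1 h
    refine tendsto_of_subseq_tendsto fun ns hns => ?_
    obtain ⟨σ, φ, hσA, hφ, hσ⟩ :=
      hA.exists_subseq_tendsto_probabilityMeasure (ν ∘ ns) fun n => hνA _
    refine ⟨φ, ?_⟩
    have hsub : Tendsto (fun n => ns (φ n) + 1) atTop atTop :=
      tendsto_add_atTop_nat 1 |>.comp (hns.comp hφ.tendsto_atTop)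
    have hfatou : ∀ᵐ x ∂(μeq : Measure (EuclideanSpace ℝ (Fin t))),
        liminf (fun n => discretePotential f (ω (ns (φ n) + 1)) x -
          polarization f A (ω (ns (φ n) + 1))) atTop = 0 := by
      have hmeas (n : ℕ) : Measurable fun x => discretePotential f (ω (ns (φ n) + 1)) x -
          polarization f A (ω (ns (φ n) + 1)) :=
        (measurable_discretePotential hf.measurable _).sub_const _
      refine (lintegral_eq_zero_iff (.liminf hmeas)).1 (le_antisymm ?_ zero_le)
      exact (lintegral_liminf_le hmeas).trans_eq (h0.comp hsub).liminf_eq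
    have hae : ∀ᵐ x ∂(μeq : Measure (EuclideanSpace ℝ (Fin t))), potential f σ x ≤ W := by
      filter_upwards [hfatou] with x hx
      refine (potential_le_liminf hf hσ tendsto_const_nhds).trans ?_
      simp only [Function.comp_apply, hpot]
      exact liminf_le_of_liminf_sub_eq_zero hx (h.comp hsub)
    have hσW : energy f (σ : Measure (EuclideanSpace ℝ (Fin t))) ≤ W := by
      refine (lintegral_mono_ae (g := fun _ => W) ?_).trans_eq (by simp)
      have hmemσ : ∀ᵐ x ∂(σ : Measure (EuclideanSpace ℝ (Fin t))), x ∈ A := hσA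
      exact hmemσ.mono fun x hx => potential_le_of_ae_le hf hae (hA3 x hx)
    have hσeq : σ = μeq := Subtype.ext <| hA2uniq σ inferInstance hσA <|
      le_antisymm (henergy ▸ hσW) (hA2min σ inferInstance hσA)
    exact hσeq ▸ hσ
  tfae_finish
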